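/- Suppose G = K_{2,r} and there is a balanced m-assignment L for G with m ≥ 3 such that P(G,L) < P(G,m). Suppose there is an ε ∈ (0,2) such that ⌊r/4⌋ > max{ ln(ε/(2(m−2))) / (2·ln((m−2)/(m−1))), ln((2−ε)/4) / ln(1 − 1/(m−1)²) }. Then for each l ≥ r, there is a balanced m-assignment L' for G' = K_{2,l} such that P(G',L') < P(G',m); consequently, P_ℓ(K_{2,l}, m) < P(K_{2,l}, m) (and hence τ(K_{2,l}) > m) whenever l ≥ r. -/

import Mathlib

/-- A proper coloring of the graph `G` from the list assignment `L` (colors are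
natural numbers): every vertex gets a color from its list, and adjacent vertices
get different colors. -/
def IsProperListColoring {V : Type*} (G : SimpleGraph V) (L : V → Finset ℕ) (f : V → ℕ) : Prop :=
  (∀ v, f v ∈ L v) ∧ ∀ ⦃u w⦄, G.Adj u w → f u ≠ f w

/-- `P(G, L)`: the number of proper `L`-colorings of `G`. -/
noncomputable def numListColorings {V : Type*} (G : SimpleGraph V) (L : V → Finset ℕ) : ℕ :=
  {f : V → ℕ | IsProperListColoring G L f}.ncard

/-- `P(G, m)`: the chromatic polynomial of `G` evaluated at `m`, i.e. the number of
proper colorings of `G` using colors from `{1, …, m}`. -/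
noncomputable def chromPoly {V : Type*} (G : SimpleGraph V) (m : ℕ) : ℕ :=
  numListColorings G fun _ => Finset.Icc 1 m

/-- `L` is an `m`-assignment: every list has size `m`. -/
def IsAssignment {V : Type*} (L : V → Finset ℕ) (m : ℕ) : Prop :=
  ∀ v, (L v).card = m

/-- `P_ℓ(G, m)`: the list color function, the minimum of `P(G, L)` over all
`m`-assignments `L` for `G`. -/
noncomputable def listColorFunction {V : Type*} (G : SimpleGraph V) (m : ℕ) : ℕ :=
  sInf {p | ∃ L : V → Finset ℕ, IsAssignment L m ∧ numListColorings G L = p}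

/-- `χ(G)`: the chromatic number, the least `m` admitting a proper coloring with
colors from `{1, …, m}`. -/
noncomputable def chromNum {V : Type*} (G : SimpleGraph V) : ℕ :=
  sInf {m | 0 < chromPoly G m}

/-- `χ_ℓ(G)`: the list chromatic number, the least `k` such that `G` has a proper
`L`-coloring for every `k`-assignment `L`. -/
noncomputable def listChromNum {V : Type*} (G : SimpleGraph V) : ℕ :=
  sInf {k | ∀ L : V → Finset ℕ, IsAssignment L k → ∃ f, IsProperListColoring G L f}

/-- `τ(G)`: the list color function threshold, the least `k ≥ χ(G)` such that
`P_ℓ(G, m) = P(G, m)` whenever `m ≥ k`. -/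
noncomputable def lcfThreshold {V : Type*} (G : SimpleGraph V) : ℕ :=
  sInf {k | chromNum G ≤ k ∧ ∀ m, k ≤ m → listColorFunction G m = chromPoly G m}

/-- The complete bipartite graph `K_{2,l}`. -/
def K2l (l : ℕ) : SimpleGraph (Fin 2 ⊕ Fin l) := completeBipartiteGraph (Fin 2) (Fin l)

/-- The four possible lists on the `y`-vertices in a balanced `m`-assignment. -/
def balSet (m : ℕ) : Fin 4 → Finset ℕ :=
  ![Finset.Icc 1 (m - 2) ∪ {m - 1, m + 1}, Finset.Icc 1 (m - 2) ∪ {m - 1, m + 2},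
    Finset.Icc 1 (m - 2) ∪ {m, m + 1}, Finset.Icc 1 (m - 2) ∪ {m, m + 2}]

/-- `z_{i+1}`: the number of `y`-vertices of `K_{2,l}` whose list is `balSet m i`. -/
def zCount {l : ℕ} (L : Fin 2 ⊕ Fin l → Finset ℕ) (m : ℕ) (i : Fin 4) : ℕ :=
  (Finset.univ.filter fun j : Fin l => L (Sum.inr j) = balSet m i).card

/-- A balanced `m`-assignment for `K_{2,l}`: an `m`-assignment with
`L(x_1) = [m]`, `L(x_2) = [m-2] ∪ {m+1, m+2}`, `z_1 + z_2 + z_3 + z_4 = l`,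
and `|z_i - z_j| ≤ 1` for all `i, j ∈ [4]`. -/
def IsBalanced {l : ℕ} (m : ℕ) (L : Fin 2 ⊕ Fin l → Finset ℕ) : Prop :=
  IsAssignment L m ∧
  L (Sum.inl 0) = Finset.Icc 1 m ∧
  L (Sum.inl 1) = Finset.Icc 1 (m - 2) ∪ {m + 1, m + 2} ∧
  (∑ i : Fin 4, zCount L m i) = l ∧
  ∀ i j : Fin 4, |(zCount L m i : ℤ) - (zCount L m j : ℤ)| ≤ 1

/-!
Write `m = n + 2`, `p = n / (n + 1)` and `t = (n + 2) / (n + 1)`. For a balanced `m`-assignment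
with list multiplicities `z₁, …, z₄`, summing over the colors of `x₁` and `x₂` gives
`P(K_{2,l}, m) - P(K_{2,l}, L) = (n + 1) ^ l * g(z)` for an explicit function `g`, which involves
only powers of `p` and `t`. Raising `z₁` by one, where `z₁ ≤ z₄`, changes `g` by at least
`p ^ z₁ / (n + 1)` times `n (p ^ z₂ + p ^ z₃) - (4 n + 2) p ^ (z₂ + z₃ + z₄)`, and this factor is
nonnegative whenever `g(z) > 0`. The symmetries of `g` give the same for the other indices. Hence a
new `y`-vertex may receive a list of least multiplicity: the assignment stays balanced and the gap
stays positive.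

Passing to `τ` also requires that some threshold exists: for `m ≥ l + 3` the constant lists minimize
the number of colorings of `K_{2,l}`.
-/

open Finset

/-- The number of ways to extend a coloring of `x₁, x₂` by `a, b` to the vertices `y_j`, when
`y_j` has the list `M j`. -/
def extensionCount {ι : Type*} [Fintype ι] (M : ι → Finset ℕ) (a b : ℕ) : ℕ :=
  ∏ j, #(M j \ {a, b})

theorem isProperListColoring_K2l_iff {l : ℕ} {L : Fin 2 ⊕ Fin l → Finset ℕ}
    {f : Fin 2 ⊕ Fin l → ℕ} :
    IsProperListColoring (K2l l) L f ↔
      (f (.inl 0) ∈ L (.inl 0) ∧ f (.inl 1) ∈ L (.inl 1)) ∧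
        ∀ j, f (.inr j) ∈ L (.inr j) \ {f (.inl 0), f (.inl 1)} := by
  simp only [mem_sdiff, mem_insert, mem_singleton, not_or]
  constructor
  · rintro ⟨hf, hproper⟩
    exact ⟨⟨hf _, hf _⟩, fun j => ⟨hf _, hproper (by simp [K2l]), hproper (by simp [K2l])⟩⟩
  · rintro ⟨⟨hx₁, hx₂⟩, hy⟩
    have hne : ∀ i j, f (.inl i) ≠ f (.inr j) := fun i j => by
      fin_cases i
      exacts [Ne.symm (hy j).2.1, Ne.symm (hy j).2.2]
    refine ⟨?_, ?_⟩
    · rintro (i | j)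
      · fin_cases i
        exacts [hx₁, hx₂]
      · exact (hy j).1
    · rintro (i | j) (i' | j') hadj
      · simp [K2l] at hadj
      · exact hne i j'
      · exact (hne i' j).symm
      · simp [K2l] at hadj

theorem numListColorings_K2l {l : ℕ} (L : Fin 2 ⊕ Fin l → Finset ℕ) :
    numListColorings (K2l l) L =
      ∑ a ∈ L (.inl 0), ∑ b ∈ L (.inl 1), extensionCount (fun j => L (.inr j)) a b := by
  let colorings := (L (.inl 0) ×ˢ L (.inl 1)).sigma fun p =>
    Fintype.piFinset fun j => L (.inr j) \ {p.1, p.2}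
  have card_colorings : #colorings =
      ∑ a ∈ L (.inl 0), ∑ b ∈ L (.inl 1), extensionCount (fun j => L (.inr j)) a b := by
    simp only [colorings, card_sigma, sum_product, Fintype.card_piFinset, extensionCount]
  have mem_colorings : ∀ a b g, ⟨(a, b), g⟩ ∈ colorings ↔
      (a ∈ L (.inl 0) ∧ b ∈ L (.inl 1)) ∧ ∀ j, g j ∈ L (.inr j) \ {a, b} := fun a b g => by
    simp only [colorings, mem_sigma, mem_product, Fintype.mem_piFinset]
  rw [← card_colorings, ← Set.ncard_coe_finset, numListColorings]
  refine Set.ncard_congr (fun f _ => ⟨(f (.inl 0), f (.inl 1)), fun j => f (.inr j)⟩) ?_ ?_ ?_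
  · exact fun f hf => (mem_colorings _ _ _).2 (isProperListColoring_K2l_iff.1 hf)
  · rintro f g _ _ hfg
    simp only [Sigma.mk.injEq, Prod.mk.injEq, heq_eq_eq] at hfg
    ext (i | j)
    · fin_cases i
      exacts [hfg.1.1, hfg.1.2]
    · exact congrFun hfg.2 j
  · rintro ⟨⟨a, b⟩, g⟩ hg
    exact ⟨Sum.elim ![a, b] g,
      isProperListColoring_K2l_iff.2 ((mem_colorings a b g).1 hg), rfl⟩

theorem card_sdiff_pair_add {α : Type*} [DecidableEq α] (s : Finset α) {a b : α} (hab : a ≠ b) :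
    #(s \ {a, b}) + ((if a ∈ s then 1 else 0) + (if b ∈ s then 1 else 0)) = #s := by
  rw [← sum_pair hab (f := fun c => if c ∈ s then 1 else 0), ← card_filter, filter_mem_eq_inter,
    inter_comm, card_sdiff_add_card_inter]

theorem sum_sum_of_diag_of_offDiag {α R : Type*} [CommRing R] {s : Finset α} {f : α → α → R}
    {u v : R} (hdiag : ∀ a ∈ s, f a a = u) (hoff : ∀ a ∈ s, ∀ b ∈ s, a ≠ b → f a b = v) :
    ∑ a ∈ s, ∑ b ∈ s, f a b = #s * u + #s * (#s - 1) * v := by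
  classical
  have hrow : ∀ a ∈ s, ∑ b ∈ s, f a b = u + (#s - 1) * v := fun a ha => by
    have herase : ∀ b ∈ s.erase a, f a b = v := fun b hb =>
      hoff a ha b (mem_of_mem_erase hb) (ne_of_mem_erase hb).symm
    rw [← add_sum_erase s _ ha, hdiag a ha, sum_congr rfl herase, sum_const, nsmul_eq_mul,
      cast_card_erase_of_mem ha]
  rw [sum_congr rfl hrow, sum_const, nsmul_eq_mul]
  ring

theorem chromPoly_K2l (l n : ℕ) :
    (chromPoly (K2l l) (n + 2) : ℝ) = (n + 2) * (n + 1) ^ l + (n + 2) * (n + 1) * n ^ l := by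
  have hcard : #(Icc 1 (n + 2)) = n + 2 := by simp
  rw [chromPoly, numListColorings_K2l]
  push_cast
  rw [sum_sum_of_diag_of_offDiag (u := (n + 1 : ℝ) ^ l) (v := n ^ l), hcard]
  · push_cast
    ring
  · intro a ha
    simp [extensionCount, sdiff_singleton_eq_erase, card_erase_of_mem ha]
  · intro a ha b hb hab
    have hcount := card_sdiff_pair_add (Icc 1 (n + 2)) hab
    rw [if_pos ha, if_pos hb, hcard] at hcount
    simp [extensionCount, show #(Icc 1 (n + 2) \ {a, b}) = n by omega]

theorem isAssignment_const {V : Type*} (m : ℕ) : IsAssignment (fun _ : V => Icc 1 m) m :=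
  fun _ => by simp

theorem listColorFunction_le {V : Type*} {G : SimpleGraph V} {m : ℕ} {L : V → Finset ℕ}
    (hL : IsAssignment L m) : listColorFunction G m ≤ numListColorings G L :=
  Nat.sInf_le ⟨L, hL, rfl⟩

/-! ### The threshold of `K_{2,l}` is well defined -/

theorem pow_card_mul_add_sum_le {ι R : Type*} [CommSemiring R] [PartialOrder R] [IsOrderedRing R]
    (s : Finset ι) {x : R} (hx : 0 ≤ x) {e : ι → R} (he : ∀ i, 0 ≤ e i) :
    x ^ #s * (x + ∑ i ∈ s, e i) ≤ x * ∏ i ∈ s, (x + e i) := by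
  induction s using Finset.cons_induction with
  | empty => simp
  | cons i s hi ih =>
    rw [card_cons, sum_cons, prod_cons]
    have hsum : 0 ≤ ∑ j ∈ s, e j := sum_nonneg fun j _ => he j
    calc x ^ (#s + 1) * (x + (e i + ∑ j ∈ s, e j))
        ≤ x ^ (#s + 1) * (x + (e i + ∑ j ∈ s, e j)) + x ^ #s * (e i * ∑ j ∈ s, e j) :=
          le_add_of_nonneg_right (mul_nonneg (pow_nonneg hx _) (mul_nonneg (he i) hsum))
      _ = (x + e i) * (x ^ #s * (x + ∑ j ∈ s, e j)) := by ring
      _ ≤ (x + e i) * (x * ∏ j ∈ s, (x + e j)) :=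
          mul_le_mul_of_nonneg_left ih (add_nonneg hx (he i))
      _ = x * ((x + e i) * ∏ j ∈ s, (x + e j)) := by ring

theorem mul_succ_pow_le {l n : ℕ} (hln : l ≤ n) :
    n * (n + 1) ^ l ≤ n ^ l * (n + (n + 1) * l) := by
  induction l with
  | zero => simp
  | succ l ih =>
    calc n * (n + 1) ^ (l + 1) = n * (n + 1) ^ l * (n + 1) := by ring
      _ ≤ n ^ l * (n + (n + 1) * l) * (n + 1) := Nat.mul_le_mul_right _ (ih (by omega))
      _ = n ^ l * ((n + (n + 1) * l) * (n + 1)) := by ring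
      _ ≤ n ^ l * (n * (n + (n + 1) * (l + 1))) := Nat.mul_le_mul_left _ (by nlinarith)
      _ = n ^ (l + 1) * (n + (n + 1) * (l + 1 : ℕ)) := by ring

section MissCount

variable {ι : Type*} [Fintype ι] {M : ι → Finset ℕ} {n : ℕ}

/-- The number of lists `M j` that do not contain the color `a`. -/
def missCount (M : ι → Finset ℕ) (a : ℕ) : ℕ :=
  #{j | a ∉ M j}

theorem pow_mul_missCount_le_extensionCount (hM : ∀ j, #(M j) = n + 2) {a b : ℕ} (hab : a ≠ b) :
    n ^ Fintype.card ι * (n + (missCount M a + missCount M b)) ≤ n * extensionCount M a b := by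
  have hcard : ∀ j, #(M j \ {a, b}) =
      n + ((if a ∉ M j then 1 else 0) + (if b ∉ M j then 1 else 0)) := fun j => by
    have := card_sdiff_pair_add (M j) hab
    rw [hM] at this
    split_ifs at this ⊢ <;> omega
  simp only [extensionCount, hcard, missCount, card_filter, ← sum_add_distrib]
  exact pow_card_mul_add_sum_le univ n.zero_le fun _ => Nat.zero_le _

theorem pow_le_extensionCount_self (hM : ∀ j, #(M j) = n + 2) (a : ℕ) :
    (n + 1) ^ Fintype.card ι ≤ extensionCount M a a := by
  have hcard : ∀ j, n + 1 ≤ #(M j \ {a, a}) := fun j => by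
    have := pred_card_le_card_erase (s := M j) (a := a)
    rwa [hM, ← sdiff_singleton_eq_erase, ← pair_eq_singleton] at this
  calc (n + 1) ^ Fintype.card ι = ∏ _j : ι, (n + 1) := by simp
    _ ≤ extensionCount M a a := prod_le_prod' fun j _ => hcard j

theorem sum_missCount (A : Finset ℕ) : ∑ a ∈ A, missCount M a = ∑ j, #(A \ M j) := by
  simp only [missCount, sdiff_eq_filter, card_filter]
  exact sum_comm

theorem card_mul_le_sum_missCount_add {A B : Finset ℕ} {k : ℕ} (hA : #A = k) (hB : #B = k)
    (hM : ∀ j, #(M j) = k) :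
    Fintype.card ι * k ≤
      ∑ a ∈ A, missCount M a + ∑ b ∈ B, missCount M b + Fintype.card ι * #(A ∩ B) := by
  have hlist : ∀ j, k ≤ #(A \ M j) + #(B \ M j) + #(A ∩ B) := fun j => by
    have hdiff := le_card_sdiff (M j) (A ∪ B)
    have hunion := card_union_le (A \ M j) (B \ M j)
    have hinter := card_union_add_card_inter A B
    rw [← union_sdiff_distrib] at hunion
    have := hM j
    omega
  calc Fintype.card ι * k = ∑ _j : ι, k := by simp
    _ ≤ ∑ j, (#(A \ M j) + #(B \ M j) + #(A ∩ B)) := sum_le_sum fun j _ => hlist j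
    _ = _ := by simp [sum_add_distrib, sum_missCount]

theorem sum_extensionCount_ge {A B : Finset ℕ} (hA : #A = n + 2) (hB : #B = n + 2)
    (hM : ∀ j, #(M j) = n + 2) :
    n ^ Fintype.card ι * (n * (n + 2) ^ 2 +
        (n + 2) * (∑ a ∈ A, missCount M a + ∑ b ∈ B, missCount M b)) +
        #(A ∩ B) * (n * (n + 1) ^ Fintype.card ι) ≤
      n * ∑ a ∈ A, ∑ b ∈ B, extensionCount M a b +
        n ^ Fintype.card ι * (n * #(A ∩ B) + 2 * ∑ a ∈ A ∩ B, missCount M a) := by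
  have hterm : ∀ a ∈ A, ∀ b ∈ B,
      n ^ Fintype.card ι * (n + (missCount M a + missCount M b)) +
          (if a = b then n * (n + 1) ^ Fintype.card ι else 0) ≤
        n * extensionCount M a b +
          (if a = b then n ^ Fintype.card ι * (n + 2 * missCount M a) else 0) := by
    intro a _ b _
    split_ifs with hab
    · subst hab
      have := Nat.mul_le_mul_left n (pow_le_extensionCount_self hM a)
      rw [← two_mul]
      omega
    · exact Nat.add_le_add_right (pow_mul_missCount_le_extensionCount hM hab) 0
  have hsum := sum_le_sum fun a ha => sum_le_sum (hterm a ha)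
  simp only [sum_add_distrib, sum_ite_eq, sum_ite_mem, ← mul_sum, sum_const, smul_eq_mul, hA, hB,
    mul_add] at hsum ⊢
  linarith

/-- Compared with `A = B`, each of the `n + 2 - #(A ∩ B)` lost coincidences `a = b` costs
`(n + 1) ^ |ι|`. By `card_mul_le_sum_missCount_add` it forces many colors of `A` and `B` to be
absent from the lists `M j`, and each absence raises `extensionCount` for all pairs using that
color. -/
theorem le_sum_extensionCount {A B : Finset ℕ} (hA : #A = n + 2) (hB : #B = n + 2)
    (hM : ∀ j, #(M j) = n + 2) (hn : 0 < n) (hcard : Fintype.card ι ≤ n) :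
    (n + 2) * (n + 1) ^ Fintype.card ι + (n + 2) * (n + 1) * n ^ Fintype.card ι ≤
      ∑ a ∈ A, ∑ b ∈ B, extensionCount M a b := by
  have hsum := sum_extensionCount_ge hA hB hM
  have hmiss := card_mul_le_sum_missCount_add hA hB hM
  have hinterA : ∑ a ∈ A ∩ B, missCount M a ≤ ∑ a ∈ A, missCount M a :=
    sum_le_sum_of_subset inter_subset_left
  have hinterB : ∑ a ∈ A ∩ B, missCount M a ≤ ∑ b ∈ B, missCount M b :=
    sum_le_sum_of_subset inter_subset_right
  have hbernoulli := mul_succ_pow_le hcard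
  obtain ⟨s, hs⟩ := Nat.exists_eq_add_of_le (hA ▸ card_le_card (inter_subset_left (s₂ := B)))
  set c := Fintype.card ι
  set t := #(A ∩ B)
  set S := ∑ a ∈ A, missCount M a + ∑ b ∈ B, missCount M b
  have hsS : c * s ≤ S := by
    rw [hs, mul_add] at hmiss
    omega
  have hinter : 2 * ∑ a ∈ A ∩ B, missCount M a ≤ S := by omega
  have hcost : s * (n * (n + 1) ^ c) ≤ n ^ c * (s * n + (n + 1) * S) :=
    calc s * (n * (n + 1) ^ c) ≤ s * (n ^ c * (n + (n + 1) * c)) := by gcongr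
      _ = n ^ c * (s * n + (n + 1) * (c * s)) := by ring
      _ ≤ n ^ c * (s * n + (n + 1) * S) := by gcongr
  have hdiag := Nat.mul_le_mul_left (n ^ c) (Nat.add_le_add_left hinter (n * t))
  refine Nat.le_of_mul_le_mul_left ?_ hn
  have hsplit : (n + 2) * (n * (n + 1) ^ c) = t * (n * (n + 1) ^ c) + s * (n * (n + 1) ^ c) := by
    rw [hs, add_mul]
  have hsplit' : n ^ c * (n * (n + 2)) = n ^ c * (n * t) + n ^ c * (n * s) := by
    rw [hs, mul_add, mul_add]
  linarith

end MissCount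

theorem chromPoly_K2l_le_numListColorings {l n : ℕ} (hn : 0 < n) (hln : l ≤ n)
    {L : Fin 2 ⊕ Fin l → Finset ℕ} (hL : IsAssignment L (n + 2)) :
    chromPoly (K2l l) (n + 2) ≤ numListColorings (K2l l) L := by
  have hsum := le_sum_extensionCount (hL (.inl 0)) (hL (.inl 1)) (fun j => hL (.inr j)) hn
    (by simpa using hln)
  rw [Fintype.card_fin, ← numListColorings_K2l] at hsum
  rw [← Nat.cast_le (α := ℝ), chromPoly_K2l]
  exact_mod_cast hsum

theorem listColorFunction_K2l_eq_chromPoly {l m : ℕ} (hm : l + 3 ≤ m) :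
    listColorFunction (K2l l) m = chromPoly (K2l l) m := by
  obtain ⟨n, rfl⟩ := Nat.exists_eq_add_of_le' (show 2 ≤ m by omega)
  refine le_antisymm (listColorFunction_le (isAssignment_const _)) ?_
  refine le_csInf ⟨_, _, isAssignment_const _, rfl⟩ ?_
  rintro _ ⟨L, hL, rfl⟩
  exact chromPoly_K2l_le_numListColorings (by omega) (by omega) hL

theorem lt_lcfThreshold_K2l {l m : ℕ}
    (h : listColorFunction (K2l l) m < chromPoly (K2l l) m) : m < lcfThreshold (K2l l) := by
  have hchrom : chromNum (K2l l) ≤ l + 3 := by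
    refine Nat.sInf_le (?_ : 0 < chromPoly (K2l l) (l + 1 + 2))
    rw [← Nat.cast_pos (α := ℝ), chromPoly_K2l]
    positivity
  have hmem : lcfThreshold (K2l l) ∈ _ :=
    Nat.sInf_mem ⟨l + 3, hchrom, fun _ => listColorFunction_K2l_eq_chromPoly⟩
  by_contra! hle
  exact h.ne (hmem.2 m hle)

/-! ### Counting the colorings of a balanced assignment -/

section BalSet

variable {n : ℕ}

theorem disjoint_Icc_pair {u v : ℕ} (hu : n < u) (hv : n < v) : Disjoint (Icc 1 n) {u, v} := by
  simp only [disjoint_insert_right, disjoint_singleton_right, mem_Icc]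
  omega

theorem card_Icc_union_pair {u v : ℕ} (hu : n < u) (hv : n < v) (huv : u ≠ v) :
    #(Icc 1 n ∪ {u, v}) = n + 2 := by
  rw [card_union_of_disjoint (disjoint_Icc_pair hu hv), card_pair huv, Nat.card_Icc,
    Nat.add_sub_cancel]

theorem sum_Icc_union_pair {R : Type*} [AddCommMonoid R] {u v : ℕ} (hu : n < u) (hv : n < v)
    (huv : u ≠ v) (f : ℕ → R) :
    ∑ a ∈ Icc 1 n ∪ {u, v}, f a = ∑ a ∈ Icc 1 n, f a + (f u + f v) := by
  rw [sum_union (disjoint_Icc_pair hu hv), sum_pair huv]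

theorem card_balSet (i : Fin 4) : #(balSet (n + 2) i) = n + 2 := by
  fin_cases i <;> exact card_Icc_union_pair (by omega) (by omega) (by omega)

theorem mem_balSet_of_mem_Icc {a : ℕ} (ha : a ∈ Icc 1 n) (i : Fin 4) : a ∈ balSet (n + 2) i := by
  fin_cases i <;> exact mem_union_left _ ha

theorem add_one_mem_balSet {i : Fin 4} : n + 1 ∈ balSet (n + 2) i ↔ i = 0 ∨ i = 1 := by
  fin_cases i <;> simp [balSet]

theorem add_two_mem_balSet {i : Fin 4} : n + 2 ∈ balSet (n + 2) i ↔ i = 2 ∨ i = 3 := by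
  fin_cases i <;> simp [balSet]

theorem add_three_mem_balSet {i : Fin 4} : n + 3 ∈ balSet (n + 2) i ↔ i = 0 ∨ i = 2 := by
  fin_cases i <;> simp [balSet]

theorem add_four_mem_balSet {i : Fin 4} : n + 4 ∈ balSet (n + 2) i ↔ i = 1 ∨ i = 3 := by
  fin_cases i <;> simp [balSet]

theorem balSet_injective : Function.Injective (balSet (n + 2)) := by
  intro i k hik
  have h1 := congrArg (n + 1 ∈ ·) hik
  have h3 := congrArg (n + 3 ∈ ·) hik
  simp only [add_one_mem_balSet, add_three_mem_balSet, eq_iff_iff] at h1 h3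
  omega

end BalSet

/-- The number of colors left in the `i`-th list of a balanced `(n + 2)`-assignment once `a` and `b`
are used on `x₁, x₂`, relative to the `n + 1` colors left when a single color of it is used. -/
noncomputable def choiceRatio (n : ℕ) (a b : ℕ) (i : Fin 4) : ℝ :=
  #(balSet (n + 2) i \ {a, b}) / (n + 1)

section ChoiceRatio

variable {n : ℕ} {a b : ℕ}

theorem choiceRatio_of_ne (hab : a ≠ b) (i : Fin 4) :
    choiceRatio n a b i =
      if a ∈ balSet (n + 2) i then
        if b ∈ balSet (n + 2) i then (n : ℝ) / (n + 1) else 1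
      else if b ∈ balSet (n + 2) i then 1 else (n + 2) / (n + 1) := by
  have hcount : (#(balSet (n + 2) i \ {a, b}) : ℝ) +
      ((if a ∈ balSet (n + 2) i then 1 else 0) + (if b ∈ balSet (n + 2) i then 1 else 0)) =
        n + 2 := by
    exact_mod_cast (card_sdiff_pair_add (balSet (n + 2) i) hab).trans (card_balSet i)
  rw [choiceRatio]
  split_ifs at hcount ⊢ <;> field_simp <;> linarith

theorem choiceRatio_self (ha : a ∈ Icc 1 n) (i : Fin 4) : choiceRatio n a a i = 1 := by
  have hcard : #(balSet (n + 2) i \ {a, a}) = n + 1 := by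
    rw [pair_eq_singleton, sdiff_singleton_eq_erase,
      card_erase_of_mem (mem_balSet_of_mem_Icc ha i), card_balSet]
    rfl
  rw [choiceRatio, hcard]
  push_cast
  exact div_self (by positivity)

theorem choiceRatio_of_mem_Icc_left (ha : a ∈ Icc 1 n) (hb : n < b) (i : Fin 4) :
    choiceRatio n a b i = if b ∈ balSet (n + 2) i then (n : ℝ) / (n + 1) else 1 := by
  rw [choiceRatio_of_ne ((mem_Icc.1 ha).2.trans_lt hb).ne, if_pos (mem_balSet_of_mem_Icc ha i)]

theorem choiceRatio_of_mem_Icc_right (ha : n < a) (hb : b ∈ Icc 1 n) (i : Fin 4) :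
    choiceRatio n a b i = if a ∈ balSet (n + 2) i then (n : ℝ) / (n + 1) else 1 := by
  simp only [choiceRatio_of_ne ((mem_Icc.1 hb).2.trans_lt ha).ne', mem_balSet_of_mem_Icc hb i,
    if_true]

theorem sum_Icc_prod_choiceRatio (n : ℕ) (z : Fin 4 → ℕ) :
    ∑ a ∈ Icc 1 n, ∑ b ∈ Icc 1 n, ∏ i, choiceRatio n a b i ^ z i =
      n + n * (n - 1) * ((n : ℝ) / (n + 1)) ^ (∑ i, z i) := by
  rw [sum_sum_of_diag_of_offDiag (u := 1) (v := ((n : ℝ) / (n + 1)) ^ (∑ i, z i))]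
  · simp
  · intro a ha
    simp [choiceRatio_self ha]
  · intro a ha b hb hab
    simp [choiceRatio_of_ne hab, mem_balSet_of_mem_Icc ha, mem_balSet_of_mem_Icc hb,
      prod_pow_eq_pow_sum]

end ChoiceRatio

theorem IsBalanced.exists_eq_balSet {l n : ℕ} {L : Fin 2 ⊕ Fin l → Finset ℕ}
    (hL : IsBalanced (n + 2) L) (j : Fin l) : ∃ i, L (.inr j) = balSet (n + 2) i := by
  have hcover : (univ.biUnion fun i => {j : Fin l | L (.inr j) = balSet (n + 2) i}) = univ := by
    rw [← card_eq_iff_eq_univ, card_biUnion, Fintype.card_fin]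
    · exact hL.2.2.2.1
    · intro i _ k _ hik
      rw [Function.onFun, disjoint_filter]
      exact fun j _ hi hk => hik (balSet_injective (hi.symm.trans hk))
  simpa using hcover.ge (mem_univ j)

theorem IsBalanced.prod_inr {l n : ℕ} {L : Fin 2 ⊕ Fin l → Finset ℕ}
    (hL : IsBalanced (n + 2) L) (g : Finset ℕ → ℝ) :
    ∏ j, g (L (.inr j)) = ∏ i, g (balSet (n + 2) i) ^ zCount L (n + 2) i := by
  choose τ hτ using hL.exists_eq_balSet
  simp only [zCount, hτ, balSet_injective.eq_iff]
  rw [← prod_fiberwise' univ τ fun i => g (balSet (n + 2) i)]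
  simp only [prod_const]

theorem IsBalanced.extensionCount_eq {l n : ℕ} {L : Fin 2 ⊕ Fin l → Finset ℕ}
    (hL : IsBalanced (n + 2) L) (a b : ℕ) :
    (extensionCount (fun j => L (.inr j)) a b : ℝ) =
      (n + 1) ^ l * ∏ i, choiceRatio n a b i ^ zCount L (n + 2) i := by
  calc (extensionCount (fun j => L (.inr j)) a b : ℝ)
      = ∏ j, (n + 1) * ((#(L (.inr j) \ {a, b}) : ℝ) / (n + 1)) := by
        rw [extensionCount, Nat.cast_prod]
        exact prod_congr rfl fun j _ => (mul_div_cancel₀ _ (by positivity)).symm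
    _ = _ := by
        rw [prod_mul_distrib, prod_const, card_univ, Fintype.card_fin,
          hL.prod_inr fun S => (#(S \ {a, b}) : ℝ) / (n + 1)]
        rfl

/-- The normalized deficit `(P(K_{2,l}, m) - P(K_{2,l}, L)) / (m - 1) ^ l` of a balanced
`m`-assignment `L` with list multiplicities `z`, as a function of `x = m - 2`. -/
noncomputable def relGap (x : ℝ) (z : Fin 4 → ℕ) : ℝ :=
  2 + (4 * x + 2) * (x / (x + 1)) ^ (∑ i, z i) -
    x * ((x / (x + 1)) ^ z 0 + (x / (x + 1)) ^ z 3) *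
      ((x / (x + 1)) ^ z 1 + (x / (x + 1)) ^ z 2) -
    ∑ i, (x / (x + 1)) ^ z i * ((x + 2) / (x + 1)) ^ z i.rev

theorem sum_prod_choiceRatio (n : ℕ) (z : Fin 4 → ℕ) :
    ∑ a ∈ Icc 1 n ∪ {n + 1, n + 2}, ∑ b ∈ Icc 1 n ∪ {n + 3, n + 4},
        ∏ i, choiceRatio n a b i ^ z i =
      (n + 2) + (n + 2) * (n + 1) * ((n : ℝ) / (n + 1)) ^ (∑ i, z i) - relGap n z := by
  have hleft : ∀ b, n < b → ∑ a ∈ Icc 1 n, ∏ i, choiceRatio n a b i ^ z i =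
      n * ∏ i, (if b ∈ balSet (n + 2) i then (n : ℝ) / (n + 1) else 1) ^ z i := by
    intro b hb
    rw [sum_congr rfl fun a ha => prod_congr rfl fun i _ => by
      rw [choiceRatio_of_mem_Icc_left ha hb], sum_const, Nat.card_Icc, Nat.add_sub_cancel,
      nsmul_eq_mul]
  have hright : ∀ a, n < a → ∑ b ∈ Icc 1 n, ∏ i, choiceRatio n a b i ^ z i =
      n * ∏ i, (if a ∈ balSet (n + 2) i then (n : ℝ) / (n + 1) else 1) ^ z i := by
    intro a ha
    rw [sum_congr rfl fun b hb => prod_congr rfl fun i _ => by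
      rw [choiceRatio_of_mem_Icc_right ha hb], sum_const, Nat.card_Icc, Nat.add_sub_cancel,
      nsmul_eq_mul]
  rw [sum_Icc_union_pair (by omega) (by omega) (by omega)]
  simp only [sum_Icc_union_pair (show n < n + 3 by omega) (show n < n + 4 by omega) (by omega),
    sum_add_distrib, sum_Icc_prod_choiceRatio]
  rw [hleft (n + 3) (by omega), hleft (n + 4) (by omega), hright (n + 1) (by omega),
    hright (n + 2) (by omega)]
  simp only [choiceRatio_of_ne, ne_eq, Nat.add_left_cancel_iff, OfNat.one_ne_ofNat,
    Nat.reduceEqDiff, not_false_eq_true, add_one_mem_balSet, add_two_mem_balSet,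
    add_three_mem_balSet, add_four_mem_balSet, relGap, Fin.prod_univ_four, Fin.sum_univ_four,
    Fin.isValue, Fin.reduceEq, zero_ne_one, one_ne_zero, Fin.rev_zero, Fin.reduceLast,
    Fin.reduceRev, or_self, or_false, or_true, ↓reduceIte, one_pow]
  ring

theorem IsBalanced.chromPoly_sub_numListColorings {l n : ℕ} {L : Fin 2 ⊕ Fin l → Finset ℕ}
    (hL : IsBalanced (n + 2) L) :
    (chromPoly (K2l l) (n + 2) : ℝ) - numListColorings (K2l l) L =
      (n + 1) ^ l * relGap n (zCount L (n + 2)) := by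
  have hx₁ : L (.inl 0) = Icc 1 n ∪ {n + 1, n + 2} := by
    rw [hL.2.1]
    ext a
    simp only [mem_union, mem_Icc, mem_insert, mem_singleton]
    omega
  have hx₂ : L (.inl 1) = Icc 1 n ∪ {n + 3, n + 4} := hL.2.2.1
  have hpow : (n + 1 : ℝ) ^ l * (n / (n + 1)) ^ l = n ^ l := by
    rw [← mul_pow, mul_div_cancel₀ _ (by positivity)]
  rw [chromPoly_K2l, numListColorings_K2l]
  push_cast
  simp only [hL.extensionCount_eq, ← mul_sum, hx₁, hx₂, sum_prod_choiceRatio, hL.2.2.2.1]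
  linear_combination -(n + 2) * (n + 1) * hpow

theorem IsBalanced.numListColorings_lt_iff {l n : ℕ} {L : Fin 2 ⊕ Fin l → Finset ℕ}
    (hL : IsBalanced (n + 2) L) :
    numListColorings (K2l l) L < chromPoly (K2l l) (n + 2) ↔
      0 < relGap n (zCount L (n + 2)) := by
  rw [← Nat.cast_lt (α := ℝ), ← sub_pos, hL.chromPoly_sub_numListColorings,
    mul_pos_iff_of_pos_left (by positivity)]

/-! ### Adding one list to a balanced assignment -/

/-- The expression in `hpos` is affine in `α`; if the conclusion failed, it would be nonpositive at
both `α = 0` and `α = 1`. -/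
theorem four_mul_add_two_mul_le_of_pos {x α β γ δ : ℝ} (hx : 1 ≤ x) (hα : α ∈ Set.Icc 0 1)
    (hβ : β ∈ Set.Icc 0 1) (hγ : γ ∈ Set.Icc 0 1) (hδ : δ ∈ Set.Icc 0 1)
    (hpos : 0 < 2 + (4 * x + 2) * (α * β * γ * δ) - x * (α + δ) * (β + γ) - (α + β + γ + δ)) :
    (4 * x + 2) * (β * γ * δ) ≤ x * (β + γ) := by
  obtain ⟨hα0, hα1⟩ := hα
  obtain ⟨hβ0, hβ1⟩ := hβ
  obtain ⟨hγ0, hγ1⟩ := hγ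
  obtain ⟨hδ0, hδ1⟩ := hδ
  by_contra! hlt
  have hβγ : 2 * (β * γ) ≤ β + γ := by nlinarith
  have hprod : 2 / 3 < (β + γ) * δ := by
    have hsq : 4 * (β * γ) ≤ (β + γ) ^ 2 := by nlinarith [sq_nonneg (β - γ)]
    have hbound : (β + γ) * (2 * x) < (β + γ) * ((2 * x + 1) * ((β + γ) * δ)) := by
      nlinarith [mul_le_mul_of_nonneg_left hsq (show 0 ≤ (4 * x + 2) * δ by positivity)]
    have := lt_of_mul_lt_mul_left hbound (add_nonneg hβ0 hγ0)
    nlinarith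
  have hat_zero : 2 - x * δ * (β + γ) - (β + γ + δ) ≤ 0 := by
    have hsum : 4 / 3 ≤ β + γ + δ := by nlinarith [sq_nonneg (β + γ - δ)]
    nlinarith
  have hat_one : 1 + (4 * x + 2) * (β * γ * δ) - x * (1 + δ) * (β + γ) - (β + γ + δ) ≤ 0 :=
    calc 1 + (4 * x + 2) * (β * γ * δ) - x * (1 + δ) * (β + γ) - (β + γ + δ)
        ≤ (1 - δ) * (1 - (x + 1) * (β + γ)) := by
          nlinarith [mul_le_mul_of_nonneg_left hβγ (show 0 ≤ (2 * x + 1) * δ by positivity)]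
      _ ≤ 0 := mul_nonpos_of_nonneg_of_nonpos (by linarith) (by nlinarith)
  nlinarith [mul_nonneg (sub_nonneg.2 hα1) (neg_nonneg.2 hat_zero),
    mul_nonneg hα0 (neg_nonneg.2 hat_one)]

section RelGap

variable {n a b c d : ℕ}

theorem relGap_vec (x : ℝ) (a b c d : ℕ) : relGap x ![a, b, c, d] =
    2 + (4 * x + 2) * ((x / (x + 1)) ^ a * (x / (x + 1)) ^ b * (x / (x + 1)) ^ c *
        (x / (x + 1)) ^ d) -
      x * ((x / (x + 1)) ^ a + (x / (x + 1)) ^ d) * ((x / (x + 1)) ^ b + (x / (x + 1)) ^ c) -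
      ((x / (x + 1)) ^ a * ((x + 2) / (x + 1)) ^ d + (x / (x + 1)) ^ b * ((x + 2) / (x + 1)) ^ c +
        (x / (x + 1)) ^ c * ((x + 2) / (x + 1)) ^ b +
        (x / (x + 1)) ^ d * ((x + 2) / (x + 1)) ^ a) := by
  simp [relGap, Fin.sum_univ_four, pow_add]

theorem relGap_reverse (x : ℝ) (a b c d : ℕ) :
    relGap x ![d, c, b, a] = relGap x ![a, b, c, d] := by
  rw [relGap_vec, relGap_vec]
  ring

theorem relGap_swap_pairs (x : ℝ) (a b c d : ℕ) :
    relGap x ![b, a, d, c] = relGap x ![a, b, c, d] := by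
  rw [relGap_vec, relGap_vec]
  ring

theorem relGap_succ_sub {x : ℝ} (hx : x + 1 ≠ 0) :
    relGap x ![a + 1, b, c, d] - relGap x ![a, b, c, d] =
      ((x / (x + 1)) ^ a * (x * ((x / (x + 1)) ^ b + (x / (x + 1)) ^ c) -
          (4 * x + 2) * ((x / (x + 1)) ^ b * (x / (x + 1)) ^ c * (x / (x + 1)) ^ d)) +
        ((x / (x + 1)) ^ a * ((x + 2) / (x + 1)) ^ d -
          (x / (x + 1)) ^ d * ((x + 2) / (x + 1)) ^ a)) / (x + 1) := by
  have hp : x / (x + 1) = 1 - 1 / (x + 1) := by field_simp; ring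
  have ht : (x + 2) / (x + 1) = 1 + 1 / (x + 1) := by field_simp; ring
  have hstep : (x / (x + 1)) ^ (a + 1) = (x / (x + 1)) ^ a * (1 - 1 / (x + 1)) := by
    rw [pow_succ, ← hp]
  have hstep' : ((x + 2) / (x + 1)) ^ (a + 1) = ((x + 2) / (x + 1)) ^ a * (1 + 1 / (x + 1)) := by
    rw [pow_succ, ← ht]
  rw [relGap_vec, relGap_vec, hstep, hstep']
  ring

theorem ratio_pow_mem_Icc (n k : ℕ) : ((n : ℝ) / (n + 1)) ^ k ∈ Set.Icc (0 : ℝ) 1 :=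
  ⟨by positivity, pow_le_one₀ (by positivity) (div_le_one_of_le₀ (by linarith) (by positivity))⟩

theorem one_le_ratio (n : ℕ) : 1 ≤ ((n : ℝ) + 2) / (n + 1) := by
  rw [one_le_div₀ (by positivity)]
  linarith

theorem four_mul_add_two_mul_pow_le_of_relGap_pos (had : a ≤ d)
    (hpos : 0 < relGap n ![a, b, c, d]) :
    (4 * n + 2) * (((n : ℝ) / (n + 1)) ^ b * (n / (n + 1)) ^ c * (n / (n + 1)) ^ d) ≤
      n * ((n / (n + 1)) ^ b + (n / (n + 1)) ^ c) := by
  rw [relGap_vec] at hpos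
  rcases n.eq_zero_or_pos with rfl | hn
  · have hne : ¬(b = 0 ∧ c = 0 ∧ d = 0) := by
      rintro ⟨rfl, rfl, rfl⟩
      obtain rfl : a = 0 := by omega
      norm_num at hpos
    rw [Nat.cast_zero, zero_div, ← pow_add, ← pow_add, zero_pow (by omega)]
    simp
  · have hle : ∀ k e, ((n : ℝ) / (n + 1)) ^ k ≤
        (n / (n + 1)) ^ k * ((n + 2) / (n + 1)) ^ e := fun k e =>
      le_mul_of_one_le_right (ratio_pow_mem_Icc n k).1 (one_le_pow₀ (one_le_ratio n))
    refine four_mul_add_two_mul_le_of_pos (by exact_mod_cast hn) (ratio_pow_mem_Icc n a)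
      (ratio_pow_mem_Icc n b) (ratio_pow_mem_Icc n c) (ratio_pow_mem_Icc n d) ?_
    linarith [hle a d, hle b c, hle c b, hle d a]

theorem relGap_le_relGap_succ (had : a ≤ d) (hpos : 0 < relGap n ![a, b, c, d]) :
    relGap n ![a, b, c, d] ≤ relGap n ![a + 1, b, c, d] := by
  have hmain := four_mul_add_two_mul_pow_le_of_relGap_pos had hpos
  have hswap : ((n : ℝ) / (n + 1)) ^ d * ((n + 2) / (n + 1)) ^ a ≤
      (n / (n + 1)) ^ a * ((n + 2) / (n + 1)) ^ d :=
    mul_le_mul (pow_le_pow_of_le_one (by positivity) (by simpa using (ratio_pow_mem_Icc n 1).2) had)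
      (pow_le_pow_right₀ (one_le_ratio n) had) (by positivity) (by positivity)
  rw [← sub_nonneg, relGap_succ_sub (by positivity)]
  have := mul_nonneg (ratio_pow_mem_Icc n a).1 (sub_nonneg.2 hmain)
  exact div_nonneg (add_nonneg this (sub_nonneg.2 hswap)) (by positivity)

theorem relGap_add_single_pos {z : Fin 4 → ℕ} {i : Fin 4} (hi : z i ≤ z i.rev)
    (hpos : 0 < relGap n z) : 0 < relGap n (z + Pi.single i 1) := by
  have hstep : ∀ {a b c d}, a ≤ d → 0 < relGap n ![a, b, c, d] →
      0 < relGap n ![a + 1, b, c, d] :=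
    fun had h => h.trans_le (relGap_le_relGap_succ had h)
  obtain ⟨a, b, c, d, rfl⟩ : ∃ a b c d, z = ![a, b, c, d] :=
    ⟨z 0, z 1, z 2, z 3, by ext k; fin_cases k <;> rfl⟩
  match i with
  | 0 =>
    rw [show ![a, b, c, d] + Pi.single 0 1 = ![a + 1, b, c, d] by ext k; fin_cases k <;> rfl]
    exact hstep hi hpos
  | 1 =>
    rw [show ![a, b, c, d] + Pi.single 1 1 = ![a, b + 1, c, d] by ext k; fin_cases k <;> rfl]
    rw [← relGap_swap_pairs] at hpos ⊢
    exact hstep hi hpos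
  | 2 =>
    rw [show ![a, b, c, d] + Pi.single 2 1 = ![a, b, c + 1, d] by ext k; fin_cases k <;> rfl]
    rw [← relGap_swap_pairs, ← relGap_reverse] at hpos ⊢
    exact hstep hi hpos
  | 3 =>
    rw [show ![a, b, c, d] + Pi.single 3 1 = ![a, b, c, d + 1] by ext k; fin_cases k <;> rfl]
    rw [← relGap_reverse] at hpos ⊢
    exact hstep hi hpos

end RelGap

/-- The list assignment for `K_{2,l+1}` extending `L` by the list `S` at the new `y`-vertex. -/
def extendAssignment {l : ℕ} (L : Fin 2 ⊕ Fin l → Finset ℕ) (S : Finset ℕ) :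
    Fin 2 ⊕ Fin (l + 1) → Finset ℕ :=
  Sum.elim (fun i => L (.inl i)) (Fin.snoc (fun j => L (.inr j)) S)

theorem zCount_extendAssignment {l n : ℕ} (L : Fin 2 ⊕ Fin l → Finset ℕ) (i : Fin 4) :
    zCount (extendAssignment L (balSet (n + 2) i)) (n + 2) =
      zCount L (n + 2) + Pi.single i 1 := by
  ext k
  rw [zCount, card_filter, Fin.sum_univ_castSucc, Pi.add_apply, zCount, card_filter]
  simp only [extendAssignment, Sum.elim_inr, Fin.snoc_castSucc, Fin.snoc_last,
    balSet_injective.eq_iff, Pi.single_apply, eq_comm]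

theorem IsBalanced.extend {l n : ℕ} {L : Fin 2 ⊕ Fin l → Finset ℕ}
    (hL : IsBalanced (n + 2) L) {i : Fin 4}
    (hi : ∀ k, zCount L (n + 2) i ≤ zCount L (n + 2) k) :
    IsBalanced (n + 2) (extendAssignment L (balSet (n + 2) i)) := by
  obtain ⟨hcard, hx₁, hx₂, hsum, hdiff⟩ := hL
  refine ⟨?_, hx₁, hx₂, ?_, ?_⟩
  · rintro (v | j)
    · exact hcard (.inl v)
    · refine Fin.lastCases ?_ (fun j => ?_) j
      · simpa [extendAssignment] using card_balSet i
      · simpa [extendAssignment] using hcard (.inr j)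
  · simp [zCount_extendAssignment, sum_add_distrib, hsum]
  · intro j k
    have hjk := hdiff j k
    have hj := hi j
    have hk := hi k
    simp only [zCount_extendAssignment, Pi.add_apply, Pi.single_apply, abs_le] at hjk ⊢
    split_ifs <;> subst_vars <;> omega

theorem IsBalanced.exists_succ {l n : ℕ} {L : Fin 2 ⊕ Fin l → Finset ℕ}
    (hL : IsBalanced (n + 2) L)
    (hlt : numListColorings (K2l l) L < chromPoly (K2l l) (n + 2)) :
    ∃ L' : Fin 2 ⊕ Fin (l + 1) → Finset ℕ, IsBalanced (n + 2) L' ∧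
      numListColorings (K2l (l + 1)) L' < chromPoly (K2l (l + 1)) (n + 2) := by
  obtain ⟨i, hi⟩ := Finite.exists_min (zCount L (n + 2))
  have hbal := hL.extend hi
  refine ⟨_, hbal, hbal.numListColorings_lt_iff.2 ?_⟩
  rw [zCount_extendAssignment]
  exact relGap_add_single_pos (hi _) (hL.numListColorings_lt_iff.1 hlt)

theorem IsBalanced.two_le {l m : ℕ} {L : Fin 2 ⊕ Fin l → Finset ℕ} (hL : IsBalanced m L) :
    2 ≤ m := by
  have hsub : {m + 1, m + 2} ⊆ L (.inl 1) := hL.2.2.1 ▸ subset_union_right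
  simpa [hL.1 (.inl 1)] using card_le_card hsub

theorem exists_balanced_of_ge_general {r m l : ℕ} {L : Fin 2 ⊕ Fin r → Finset ℕ}
    (hbal : IsBalanced m L) (hlt : numListColorings (K2l r) L < chromPoly (K2l r) m)
    (hrl : r ≤ l) :
    (∃ L' : Fin 2 ⊕ Fin l → Finset ℕ, IsBalanced m L' ∧
      numListColorings (K2l l) L' < chromPoly (K2l l) m) ∧
    listColorFunction (K2l l) m < chromPoly (K2l l) m ∧
    m < lcfThreshold (K2l l) := by
  obtain ⟨n, rfl⟩ := Nat.exists_eq_add_of_le' hbal.two_le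
  obtain ⟨L', hbal', hlt'⟩ : ∃ L' : Fin 2 ⊕ Fin l → Finset ℕ, IsBalanced (n + 2) L' ∧
      numListColorings (K2l l) L' < chromPoly (K2l l) (n + 2) := by
    induction l, hrl using Nat.le_induction with
    | base => exact ⟨L, hbal, hlt⟩
    | succ l _ ih =>
      obtain ⟨L', hbal', hlt'⟩ := ih
      exact hbal'.exists_succ hlt'
  have hlist := (listColorFunction_le hbal'.1).trans_lt hlt'
  exact ⟨⟨L', hbal', hlt'⟩, hlist, lt_lcfThreshold_K2l hlist⟩

/-- Lemma 4 of the paper: if `G = K_{2,r}` has a balanced `m`-assignment `L` with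
`m ≥ 3` and `P(G,L) < P(G,m)`, and there is `ε ∈ (0,2)` with
`⌊r/4⌋ > max{ln(ε/(2(m-2)))/(2 ln((m-2)/(m-1))), ln((2-ε)/4)/ln(1-1/(m-1)²)}`,
then for each `l ≥ r` the graph `G' = K_{2,l}` has a balanced `m`-assignment `L'`
with `P(G',L') < P(G',m)`; consequently `P_ℓ(K_{2,l},m) < P(K_{2,l},m)`, i.e.
`τ(K_{2,l}) > m`, whenever `l ≥ r`. -/
theorem exists_balanced_of_ge (r m : ℕ) (hm : 3 ≤ m)
    (L : Fin 2 ⊕ Fin r → Finset ℕ) (hbal : IsBalanced m L)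
    (hlt : numListColorings (K2l r) L < chromPoly (K2l r) m)
    (ε : ℝ) (hε : ε ∈ Set.Ioo (0 : ℝ) 2)
    (hr : ((r / 4 : ℕ) : ℝ) >
      max (Real.log (ε / (2 * ((m : ℝ) - 2))) / (2 * Real.log (((m : ℝ) - 2) / ((m : ℝ) - 1))))
        (Real.log ((2 - ε) / 4) / Real.log (1 - 1 / ((m : ℝ) - 1) ^ 2))) :
    ∀ l : ℕ, r ≤ l →
      (∃ L' : Fin 2 ⊕ Fin l → Finset ℕ, IsBalanced m L' ∧
        numListColorings (K2l l) L' < chromPoly (K2l l) m) ∧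
      listColorFunction (K2l l) m < chromPoly (K2l l) m ∧
      m < lcfThreshold (K2l l) :=
  fun _ => exists_balanced_of_ge_general hbal hlt
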